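/- Generating function for all Schur polynomials: ∑_λ s_λ(x_1, ..., x_n) = ∏_{i=1}^n 1/(1 − x_i) · ∏_{1 ≤ i < j ≤ n} 1/(1 − x_i x_j), where the sum is over all partitions λ with at most n parts, as an identity of formal power series in x_1, ..., x_n. -/

import Mathlib

open MvPolynomial

/-- The complete homogeneous symmetric polynomial with integer index: `0` for negative
index, `h_k` for `k ≥ 0`. -/
noncomputable def hInt (nv : ℕ) (k : ℤ) : MvPolynomial (Fin nv) ℚ :=
  if 0 ≤ k then hsymm (Fin nv) ℚ k.toNat else 0

/-- The Schur polynomial in `nv` variables of a partition given by its first `N` parts,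
defined by the Jacobi–Trudi determinant `s_λ = det(h_{λ_i + j - i})_{i,j < N}`. -/
noncomputable def schur (nv N : ℕ) (lam : Fin N → ℕ) : MvPolynomial (Fin nv) ℚ :=
  Matrix.det (Matrix.of fun i j : Fin N => hInt nv ((lam i : ℤ) + (j : ℤ) - (i : ℤ)))

open Finset in
lemma lw_lag {m : ℕ} (v : Fin (m+1) → ℝ) (hv : Function.Injective v) (P : Polynomial ℝ)
    (hP : P.degree < ((m+1 : ℕ) : WithBot ℕ)) :
    P.coeff m = ∑ i, P.eval (v i) / ∏ l, (v i - v (i.succAbove l)) := by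
  have h := Lagrange.coeff_eq_sum (s := Finset.univ) (v := v) hv.injOn (P := P) (by simpa using hP)
  simp only [card_univ, Fintype.card_fin, Nat.add_sub_cancel] at h
  rw [h]
  refine Finset.sum_congr rfl fun i _ => ?_
  congr 1
  have : Finset.univ.erase i = Finset.univ.map (Fin.succAboveEmb i) := by
    ext j
    simp only [mem_erase, mem_univ, and_true, mem_map, true_and]
    exact ⟨fun hj => Fin.exists_succAbove_eq hj, by rintro ⟨l, rfl⟩; exact Fin.succAbove_ne i l⟩
  rw [this, Finset.prod_map]
  rfl

lemma lw_interp (n : ℕ) (x : Fin (n+1) → ℝ) (hinj : Function.Injective x)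
    (h0 : ∀ i, x i ≠ 0) (h1 : ∀ i, x i ≠ -1) :
    ∑ k, (1 - x k) * ∏ l, (x (k.succAbove l) * (1 - x k * x (k.succAbove l))
        / (x (k.succAbove l) - x k)) = 1 - ∏ k, x k := by
  set P : Polynomial ℝ := ∏ k, (1 - Polynomial.C (x k) * Polynomial.X) with hPdef
  have hPe : ∀ t, P.eval t = ∏ k, (1 - x k * t) := by
    intro t; simp [hPdef, Polynomial.eval_prod]
  have hPd : P.natDegree ≤ n + 1 := by
    refine (Polynomial.natDegree_prod_le _ _).trans ?_
    refine (Finset.sum_le_card_nsmul _ _ 1 ?_).trans (by simp)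
    intro k _
    compute_degree
  let v : Fin (n+1+1+1) → ℝ := Fin.cons 0 (Fin.cons (-1) x)
  have hv : Function.Injective v := by
    refine Fin.cons_injective_iff.2 ⟨?_, Fin.cons_injective_iff.2 ⟨?_, hinj⟩⟩
    · rintro ⟨i, hi⟩
      induction i using Fin.cases with
      | zero => norm_num at hi
      | succ i => exact h0 i (by simpa using hi)
    · rintro ⟨i, hi⟩
      exact h1 i hi
  have h := lw_lag v hv P (lt_of_le_of_lt Polynomial.degree_le_natDegree
    (by exact_mod_cast (by omega : P.natDegree < n+1+1+1)))
  rw [Polynomial.coeff_eq_zero_of_natDegree_lt (by omega)] at h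
  rw [Fin.sum_univ_succ, Fin.sum_univ_succ] at h
  simp only [Fin.prod_univ_succ (n := n+1), Fin.succAbove_zero, Fin.succ_succAbove_zero,
    Fin.succ_succAbove_succ, v, Fin.cons_zero, Fin.cons_succ, hPe] at h
  have hX : ∏ k, x k ≠ 0 := Finset.prod_ne_zero_iff.2 fun k _ => h0 k
  have hY : ∏ k, (1 + x k) ≠ 0 := Finset.prod_ne_zero_iff.2 fun k _ => by
    intro hh; exact h1 k (by linarith)
  have key : ∀ k, (∏ j, (1 - x j * x k)) / ((x k - 0) * ∏ l : Fin (n+1),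
      (x k - (Fin.cons (-1) x : Fin (n+1+1) → ℝ) (k.succ.succAbove l))) =
     (-1)^n * (∏ k, x k)⁻¹ * ((1 - x k) * ∏ l, (x (k.succAbove l) * (1 - x k * x (k.succAbove l))
        / (x (k.succAbove l) - x k))) := by
    intro k
    have e0 : ∏ l : Fin (n+1), (x k - (Fin.cons (-1) x : Fin (n+1+1) → ℝ) (k.succ.succAbove l))
        = (x k - -1) * ∏ l, (x k - x (k.succAbove l)) := by
      rw [Fin.prod_univ_succ]
      simp only [Fin.succ_succAbove_zero, Fin.succ_succAbove_succ, Fin.cons_zero, Fin.cons_succ]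
    rw [e0]
    rw [Fin.prod_univ_succAbove _ k, Fin.prod_univ_succAbove x k]
    have hpos : ∏ l, x (k.succAbove l) ≠ 0 := Finset.prod_ne_zero_iff.2 fun l _ => h0 _
    have hd : ∏ l, (x (k.succAbove l) - x k) ≠ 0 := Finset.prod_ne_zero_iff.2 fun l _ =>
      sub_ne_zero.2 fun hh => Fin.succAbove_ne k l (hinj hh)
    have e1 : ∏ l, (x k - x (k.succAbove l)) = (-1)^n * ∏ l, (x (k.succAbove l) - x k) := by
      rw [← Fin.prod_const n (-1 : ℝ), ← Finset.prod_mul_distrib]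
      exact Finset.prod_congr rfl fun l _ => by ring
    have e2 : ∏ l, (1 - x (k.succAbove l) * x k) = ∏ l, (1 - x k * x (k.succAbove l)) := 
      Finset.prod_congr rfl fun l _ => by ring
    rw [Finset.prod_div_distrib, Finset.prod_mul_distrib, e1, e2]
    have := h0 k
    have h1k : x k + 1 ≠ 0 := fun hh => h1 k (by linarith)
    have hs : ((-1:ℝ)^n)*(-1)^n = 1 := by rw [← mul_pow]; simp
    have hs' : ((-1:ℝ)^n) ≠ 0 := by positivity
    rw [sub_zero, sub_neg_eq_add]
    field_simp
    rw [show (((-1:ℝ)^n))^2 = 1 by rw [pow_two, hs]]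
    ring
  simp only [key] at h
  rw [← Finset.mul_sum] at h
  have e3 : ∏ l, (0 - x l) = (-1)^(n+1) * ∏ l, x l := by
    rw [← Fin.prod_const (n+1) (-1 : ℝ), ← Finset.prod_mul_distrib]
    exact Finset.prod_congr rfl fun l _ => by ring
  have e4 : ∏ l, (-1 - x l) = (-1)^(n+1) * ∏ l, (1 + x l) := by
    rw [← Fin.prod_const (n+1) (-1 : ℝ), ← Finset.prod_mul_distrib]
    exact Finset.prod_congr rfl fun l _ => by ring
  have e5 : ∏ l, (1 - x l * -1) = ∏ l, (1 + x l) :=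
    Finset.prod_congr rfl fun l _ => by ring
  rw [e3, e4, e5] at h
  generalize (∑ k, (1 - x k) * ∏ l, (x (k.succAbove l) * (1 - x k * x (k.succAbove l))
        / (x (k.succAbove l) - x k))) = S at h ⊢
  have hs' : ((-1:ℝ)^n) ≠ 0 := by positivity
  have hs : ((-1:ℝ)^n)*(-1)^n = 1 := by rw [← mul_pow]; simp
  simp only [mul_zero, sub_zero, Finset.prod_const_one, pow_succ] at h
  generalize ((-1:ℝ)^n) = e at *
  generalize (∏ k, x k) = Y at *
  field_simp at h
  rw [pow_two, hs] at h
  linarith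
open Finset in
lemma lw_pair {n : ℕ} (k : Fin (n+1)) (f : Fin (n+1) → Fin (n+1) → ℝ) :
    ∏ i, ∏ j ∈ Finset.univ.filter (fun j => i < j), f i j =
    (∏ l, if k < k.succAbove l then f k (k.succAbove l) else f (k.succAbove l) k) *
    ∏ i, ∏ j ∈ Finset.univ.filter (fun j => i < j), f (k.succAbove i) (k.succAbove j) := by
  simp only [Finset.prod_filter]
  rw [Fin.prod_univ_succAbove _ k, Fin.prod_univ_succAbove _ k]
  simp only [Fin.prod_univ_succAbove _ k, lt_irrefl, if_false, one_mul, Finset.prod_mul_distrib]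
  rw [← mul_assoc, ← Finset.prod_mul_distrib]
  congr 1
  · refine Finset.prod_congr rfl fun l _ => ?_
    rcases lt_or_gt_of_ne (Fin.succAbove_ne k l) with h | h
    · simp [h, h.not_gt]
    · simp [h, h.not_gt]
  · simp [Fin.succAbove_lt_succAbove_iff]

lemma lw_sign {n : ℕ} (k : Fin (n+1)) (x : Fin (n+1) → ℝ) :
    (∏ l, if k < k.succAbove l then x k - x (k.succAbove l) else x (k.succAbove l) - x k) =
      (-1) ^ (n + (k : ℕ)) * ∏ l, (x (k.succAbove l) - x k) := by
  have : ∀ l, (if k < k.succAbove l then x k - x (k.succAbove l) else x (k.succAbove l) - x k)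
     = (if k ≤ l.castSucc then (-1:ℝ) else 1) * (x (k.succAbove l) - x k) := by
    intro l
    simp only [Fin.lt_succAbove_iff_le_castSucc]
    split_ifs <;> ring
  simp only [this, Finset.prod_mul_distrib]
  congr 1
  rw [Finset.prod_ite]
  simp only [Finset.prod_const, one_pow, mul_one]
  have hc : (Finset.univ.filter fun l : Fin n => k ≤ l.castSucc).card = n - k := by
    have h1 : (Finset.univ.filter fun l : Fin n => k ≤ l.castSucc).card
      = (Finset.Ico (k:ℕ) n).card := by
      apply Finset.card_bij (fun (l : Fin n) _ => (l : ℕ))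
      · intro a ha; simp [Fin.le_def] at ha ⊢; exact ha
      · intro a _ b _ h; exact Fin.ext h
      · intro b hb; simp at hb
        exact ⟨⟨b, hb.2⟩, by simp [Fin.le_def]; exact hb.1, rfl⟩
    rw [h1]; simp
  rw [hc]
  have hk : (k:ℕ) ≤ n := Nat.lt_succ_iff.1 k.2
  have h2 : n + (k:ℕ) = (n - k) + 2 * k := by omega
  rw [h2, pow_add, pow_mul]; simp

def lwPart (n : ℕ) := {f : Fin n → ℕ // ∀ i j : Fin n, i ≤ j → f j ≤ f i}

def lwEquiv (n : ℕ) : ℕ × lwPart n ≃ lwPart (n+1) where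
  toFun p := ⟨Fin.snoc (α := fun _ => ℕ) (fun i => p.2.1 i + p.1) p.1, by
    intro i j hij
    induction j using Fin.lastCases with
    | last =>
      induction i using Fin.lastCases with
      | last => simp
      | cast i => simp
    | cast j =>
      induction i using Fin.lastCases with
      | last => exact absurd hij (not_le.2 (Fin.castSucc_lt_last j))
      | cast i => simpa using p.2.2 i j (by simpa using hij)⟩
  invFun f := (f.1 (Fin.last n), ⟨fun i => f.1 i.castSucc - f.1 (Fin.last n), fun i j hij =>
    Nat.sub_le_sub_right (f.2 _ _ (by simpa using hij)) _⟩)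
  left_inv p := by
    apply Prod.ext
    · simp
    · apply Subtype.ext; funext i; simp
  right_inv f := by
    apply Subtype.ext; funext i
    induction i using Fin.lastCases with
    | last => simp
    | cast i => simpa using Nat.sub_add_cancel (f.2 _ _ (Fin.le_last _))

lemma lwEquiv_last (n : ℕ) (p : ℕ × lwPart n) : (lwEquiv n p).1 (Fin.last n) = p.1 := by
  change Fin.snoc (α := fun _ => ℕ) (fun i => p.2.1 i + p.1) p.1 (Fin.last n) = _
  simp

lemma lwEquiv_cast (n : ℕ) (p : ℕ × lwPart n) (i : Fin n) :
    (lwEquiv n p).1 i.castSucc = p.2.1 i + p.1 := by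
  change Fin.snoc (α := fun _ => ℕ) (fun i => p.2.1 i + p.1) p.1 i.castSucc = _
  simp

lemma lw_hasSum_mul {α : Type*} {f : ℕ → ℝ} {g : α → ℝ} {a b : ℝ} (hf : HasSum f a)
    (hg : HasSum g b) : HasSum (fun p : ℕ × α => f p.1 * g p.2) (a * b) :=
  hf.mul hg (summable_mul_of_summable_norm hf.summable.norm hg.summable.norm)

/-- alternant -/
noncomputable def lwAlt (n : ℕ) (x : Fin n → ℝ) (f : Fin n → ℕ) : ℝ :=
  Matrix.det (Matrix.of fun i k : Fin n => x k ^ (f i + (n - 1 - (i:ℕ))))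

lemma lw_alt_succ (n : ℕ) (x : Fin (n+1) → ℝ) (p : ℕ × lwPart n) :
    lwAlt (n+1) x (lwEquiv n p).1 = (∏ k, x k) ^ p.1 * 
      ∑ k : Fin (n+1), (-1) ^ (n + (k:ℕ)) * (∏ l, x (k.succAbove l)) * 
        lwAlt n (fun l => x (k.succAbove l)) p.2.1 := by
  have h1 : (Matrix.of fun i k : Fin (n+1) => x k ^ ((lwEquiv n p).1 i + (n + 1 - 1 - (i:ℕ))))
    = Matrix.of fun i k => (x k ^ p.1) * (Matrix.of fun i k : Fin (n+1) => x k ^ 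
      (Fin.snoc (α := fun _ => ℕ) p.2.1 0 i + (n - (i:ℕ))) : Matrix _ _ ℝ) i k := by
    ext i k
    simp only [Matrix.of_apply]
    rw [← pow_add]
    congr 1
    induction i using Fin.lastCases with
    | last => simp [lwEquiv_last]
    | cast i => simp [lwEquiv_cast]; ring
  rw [lwAlt, h1, Matrix.det_mul_row, Finset.prod_pow, Matrix.det_succ_row _ (Fin.last n)]
  congr 1
  refine Finset.sum_congr rfl fun k _ => ?_
  simp only [Matrix.of_apply, Fin.snoc_last, Fin.val_last, Nat.sub_self, add_zero, pow_zero, mul_one]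
  rw [mul_assoc]
  congr 1
  rw [lwAlt, ← Matrix.det_mul_row]
  congr 1
  ext i l
  simp only [Matrix.submatrix_apply, Matrix.of_apply, Fin.succAbove_last, Fin.snoc_castSucc]
  rw [← pow_succ']
  congr 1
  have := i.2
  simp
  omega

lemma lw_hasSum : ∀ (n : ℕ) (x : Fin n → ℝ), (∀ i, |x i| < 1) → Function.Injective x →
    (∀ i, x i ≠ 0) → HasSum (fun f : lwPart n => lwAlt n x f.1)
      ((∏ i, ∏ j ∈ Finset.univ.filter (fun j => i < j), (x i - x j)) * ((∏ i, (1 - x i)⁻¹) *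
        ∏ i, ∏ j ∈ Finset.univ.filter (fun j => i < j), (1 - x i * x j)⁻¹)) := by
  intro n
  induction n with
  | zero =>
    intro x _ _ _
    have : Unique (lwPart 0) := ⟨⟨⟨fun i => i.elim0, fun i => i.elim0⟩⟩,
      fun a => Subtype.ext (funext fun i => i.elim0)⟩
    convert! hasSum_unique (fun f : lwPart 0 => lwAlt 0 x f.1)
    simp [lwAlt]
  | succ n ih =>
    intro x hx hinj h0
    rw [← (lwEquiv n).hasSum_iff]
    simp only [Function.comp_def, lw_alt_succ]
    have hX : |∏ k, x k| < 1 := by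
      rw [Finset.abs_prod]
      have := Finset.prod_le_prod (s := Finset.univ) (f := fun i : Fin n => |x i.succ|) 
        (g := fun _ => 1) (fun i _ => abs_nonneg _) (fun i _ => (hx _).le)
      rw [Fin.prod_univ_succ]
      simp only [Finset.prod_const_one] at this
      have h2 := hx 0
      have h3 := abs_nonneg (x 0)
      nlinarith
    have hg := hasSum_geometric_of_abs_lt_one hX
    have hs : HasSum (fun f : lwPart n => ∑ k : Fin (n+1), (-1) ^ (n + (k:ℕ)) * (∏ l, x (k.succAbove l)) * 
        lwAlt n (fun l => x (k.succAbove l)) f.1) _ := hasSum_sum fun k _ =>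
      (ih (fun l => x (k.succAbove l)) (fun i => hx _) (hinj.comp Fin.succAbove_right_injective)
        (fun i => h0 _)).mul_left _
    have hp := lw_hasSum_mul hg hs
    convert! hp using 1
    have h1X : (1 - ∏ k, x k) ≠ 0 := by
      have := (abs_lt.1 hX).2; linarith
    have hin := lw_interp n x hinj h0 (fun i h => by have := hx i; rw [h] at this; norm_num at this)
    rw [eq_inv_mul_iff_mul_eq₀ h1X, ← hin, Finset.sum_mul]
    refine Finset.sum_congr rfl fun k _ => ?_
    rw [lw_pair k, lw_pair k, lw_sign k, Fin.prod_univ_succAbove (fun i => (1 - x i)⁻¹) k]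
    have hd : ∏ l, (x (k.succAbove l) - x k) ≠ 0 := Finset.prod_ne_zero_iff.2 fun l _ =>
      sub_ne_zero.2 fun hh => Fin.succAbove_ne k l (hinj hh)
    have he : ∏ l, (1 - x k * x (k.succAbove l)) ≠ 0 := Finset.prod_ne_zero_iff.2 fun l _ => by
      have h1 := hx k
      have h2 := hx (k.succAbove l)
      have h3 : |x k * x (k.succAbove l)| < 1 := by
        rw [abs_mul]
        have := abs_nonneg (x k)
        have := abs_nonneg (x (k.succAbove l))
        nlinarith
      have := (abs_lt.1 h3).2
      linarith
    have hk : 1 - x k ≠ 0 := by have := (abs_lt.1 (hx k)).2; linarith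
    have e1 : (∏ l, if k < k.succAbove l then (1 - x k * x (k.succAbove l))⁻¹ 
        else (1 - x (k.succAbove l) * x k)⁻¹) = (∏ l, (1 - x k * x (k.succAbove l)))⁻¹ := by
      rw [← Finset.prod_inv_distrib]
      refine Finset.prod_congr rfl fun l _ => ?_
      rw [mul_comm (x (k.succAbove l)), ite_self]
    rw [e1, Finset.prod_div_distrib, Finset.prod_mul_distrib]
    field_simp
noncomputable def lwH (n : ℕ) (x : Fin n → ℝ) (k : ℕ) : ℝ := ∑ s : Sym (Fin n) k, (s.1.map x).prod

noncomputable def lwHZ (n : ℕ) (x : Fin n → ℝ) (k : ℤ) : ℝ := if 0 ≤ k then lwH n x k.toNat else 0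

lemma lw_aeval_hInt (n : ℕ) (x : Fin n → ℝ) (k : ℤ) : aeval x (hInt n k) = lwHZ n x k := by
  unfold hInt lwHZ
  split_ifs
  · simp only [hsymm, lwH, map_sum]
    refine Finset.sum_congr rfl fun s _ => ?_
    rw [map_multiset_prod, Multiset.map_map]
    simp [Function.comp_def]
  · simp

lemma lw_aeval_schur (n : ℕ) (x : Fin n → ℝ) (f : Fin n → ℕ) : aeval x (schur n n f) = 
    Matrix.det (Matrix.of fun i j : Fin n => lwHZ n x ((f i : ℤ) + (j : ℤ) - (i : ℤ))) := by
  rw [schur, AlgHom.map_det]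
  congr 1
  ext i j
  simp [lw_aeval_hInt]

lemma lw_H_eq (n : ℕ) (x : Fin n → ℝ) (k : ℕ) :
    lwH n x k = PowerSeries.coeff k (∏ l, PowerSeries.mk (fun m => x l ^ m)) := by
  rw [PowerSeries.coeff_prod, lwH]
  simp only [PowerSeries.coeff_mk]
  rw [← Finset.sum_coe_sort (Finset.finsuppAntidiag Finset.univ k)]
  refine Fintype.sum_equiv ((Sym.equivNatSum (Fin n) k).trans (Equiv.subtypeEquivRight ?_)) _ _ ?_
  · intro f
    simp [Finset.mem_finsuppAntidiag, Finsupp.sum_fintype]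
  · intro s
    rw [Finset.prod_multiset_map_count]
    refine (Finset.prod_subset (Finset.subset_univ _) ?_).trans ?_
    · intro i _ hi
      rw [Multiset.mem_toFinset] at hi
      rw [Multiset.count_eq_zero_of_notMem hi, pow_zero]
    · refine Finset.prod_congr rfl fun i _ => ?_
      congr 1

lemma lw_geom (a : ℝ) : PowerSeries.mk (fun m => a ^ m) * (1 - PowerSeries.C a * PowerSeries.X) = 1 := by
  ext m
  rw [mul_sub, mul_one, ← mul_assoc]
  cases m with
  | zero => simp
  | succ m => 
    rw [map_sub, PowerSeries.coeff_succ_mul_X, mul_comm, PowerSeries.coeff_C_mul]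
    simp [PowerSeries.coeff_one, pow_succ']

noncomputable def lwQ (n : ℕ) (x : Fin n → ℝ) (k : Fin n) : Polynomial ℝ :=
  ∏ l ∈ Finset.univ.erase k, (1 - Polynomial.C (x l) * Polynomial.X)

lemma lw_Q_coeff (n : ℕ) (x : Fin n → ℝ) (k : Fin n) (b : ℕ) (hb : n ≤ b) : (lwQ n x k).coeff b = 0 := by
  apply Polynomial.coeff_eq_zero_of_natDegree_lt
  have : (lwQ n x k).natDegree ≤ n - 1 := by
    refine (Polynomial.natDegree_prod_le _ _).trans ?_
    refine (Finset.sum_le_card_nsmul _ _ 1 ?_).trans (by simp)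
    intro k _
    compute_degree
  have := k.2
  omega

lemma lw_HQ (n : ℕ) (x : Fin n → ℝ) (k : Fin n) :
    (∏ l, PowerSeries.mk (fun m => x l ^ m)) * (lwQ n x k : PowerSeries ℝ) 
      = PowerSeries.mk (fun m => x k ^ m) := by
  have : (lwQ n x k : PowerSeries ℝ) = 
      ∏ l ∈ Finset.univ.erase k, (1 - PowerSeries.C (x l) * PowerSeries.X) := by
    rw [lwQ, ← Polynomial.coeToPowerSeries.ringHom_apply, map_prod]
    simp
  rw [this, ← Finset.mul_prod_erase _ _ (Finset.mem_univ k), mul_assoc, ← Finset.prod_mul_distrib]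
  simp [lw_geom]

lemma lw_pow (n : ℕ) (x : Fin n → ℝ) (k : Fin n) (m : ℕ) :
    x k ^ m = ∑ b : Fin n, lwHZ n x ((m : ℤ) - (b : ℤ)) * (lwQ n x k).coeff b := by
  have h := congrArg (PowerSeries.coeff m) (lw_HQ n x k)
  rw [PowerSeries.coeff_mk, mul_comm, PowerSeries.coeff_mul,
    Finset.Nat.sum_antidiagonal_eq_sum_range_succ_mk] at h
  rw [← h, Finset.sum_range (fun b => _), 
    Fin.sum_univ_eq_sum_range (fun b => lwHZ n x ((m : ℤ) - (b : ℤ)) * (lwQ n x k).coeff b) n,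
    Fin.sum_univ_eq_sum_range (fun b => (PowerSeries.coeff b) (lwQ n x k : PowerSeries ℝ) * 
      PowerSeries.coeff (m - b) (∏ l, PowerSeries.mk (fun m => x l ^ m))) (m+1)]
  have e : ∀ b, b < m + 1 → (PowerSeries.coeff b) (lwQ n x k : PowerSeries ℝ) * 
      PowerSeries.coeff (m - b) (∏ l, PowerSeries.mk (fun m => x l ^ m)) 
      = lwHZ n x ((m : ℤ) - (b : ℤ)) * (lwQ n x k).coeff b := by
    intro b hb
    rw [← lw_H_eq, lwHZ, if_pos (by omega), Polynomial.coeff_coe, mul_comm]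
    congr 2
    omega
  rw [Finset.sum_congr rfl fun b hb => e b (Finset.mem_range.1 hb)]
  rw [Finset.sum_subset (Finset.range_mono (le_max_left (m+1) n)),
    ← Finset.sum_subset (Finset.range_mono (le_max_right (m+1) n))]
  · intro b _ hb
    rw [lw_Q_coeff _ _ _ _ (by simpa using hb), mul_zero]
  · intro b _ hb
    rw [Finset.mem_range] at hb
    rw [lwHZ, if_neg (by omega), zero_mul]

lemma lw_JT (n : ℕ) (x : Fin n → ℝ) (f : Fin n → ℕ) :
    aeval x (schur n n f) * 
      (Matrix.det (Matrix.of fun j k : Fin n => (lwQ n x k).coeff (n - 1 - (j:ℕ)))) = lwAlt n x f := by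
  rw [lw_aeval_schur, ← Matrix.det_mul, lwAlt]
  congr 1
  ext i k
  rw [Matrix.mul_apply]
  simp only [Matrix.of_apply]
  rw [lw_pow, ← Equiv.sum_comp Fin.revPerm]
  refine Finset.sum_congr rfl fun j _ => ?_
  have := j.2
  have := i.2
  simp only [Fin.revPerm_apply, Fin.val_rev]
  congr 2
  · push_cast [show (j:ℕ) + 1 ≤ n from j.2, show (i:ℕ) ≤ n - 1 by omega, show 1 ≤ n by omega]
    omega
  · omega

lemma lw_schur_zero (n : ℕ) (x : Fin n → ℝ) : aeval x (schur n n (fun _ => 0)) = 1 := by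
  rw [lw_aeval_schur, Matrix.det_of_isUpperTriangular]
  · refine Finset.prod_eq_one fun i _ => ?_
    simp [lwHZ, lw_H_eq, map_prod]
  · intro i j hij
    have : (j:ℕ) < i := hij
    simp only [Matrix.of_apply, lwHZ]
    rw [if_neg]
    push_cast
    omega

lemma lw_alt_zero (n : ℕ) (x : Fin n → ℝ) : lwAlt n x (fun _ => 0) = 
    ∏ i, ∏ j ∈ Finset.univ.filter (fun j => i < j), (x i - x j) := by
  have h := Matrix.det_projVandermonde (fun _ => 1) x
  rw [lwAlt, ← Matrix.det_transpose]
  have e : (Matrix.of fun i k : Fin n => x k ^ (0 + (n - 1 - (i:ℕ)))).transpose = 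
    Matrix.projVandermonde (fun _ => 1) x := by
    ext i j
    simp only [Matrix.transpose_apply, Matrix.of_apply, Matrix.projVandermonde_apply, one_pow, one_mul,
      Fin.val_rev]
    congr 1
    omega
  rw [e, h]
  refine Finset.prod_congr rfl fun i _ => Finset.prod_congr ?_ fun j _ => by ring
  ext j; simp

lemma lw_bialt (n : ℕ) (x : Fin n → ℝ) (f : Fin n → ℕ) :
    aeval x (schur n n f) * (∏ i, ∏ j ∈ Finset.univ.filter (fun j => i < j), (x i - x j)) =
      lwAlt n x f := by
  rw [← lw_JT n x f, ← lw_alt_zero, ← lw_JT n x (fun _ => 0), lw_schur_zero, one_mul]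

lemma lw_generic (n : ℕ) (x : Fin n → ℝ) (hx : ∀ i, |x i| < 1) (hinj : Function.Injective x)
    (h0 : ∀ i, x i ≠ 0) : HasSum (fun f : lwPart n => aeval x (schur n n f.1))
      ((∏ i, (1 - x i)⁻¹) *
        ∏ i, ∏ j ∈ Finset.univ.filter (fun j => i < j), (1 - x i * x j)⁻¹) := by
  have hV : (∏ i, ∏ j ∈ Finset.univ.filter (fun j => i < j), (x i - x j)) ≠ 0 := by
    refine Finset.prod_ne_zero_iff.2 fun i _ => Finset.prod_ne_zero_iff.2 fun j hj => ?_
    have hij : i < j := by simpa using hj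
    exact sub_ne_zero.2 fun h => hij.ne (hinj h)
  have h := lw_hasSum n x hx hinj h0
  simp only [← lw_bialt] at h
  rw [mul_comm] at h
  exact (hasSum_mul_right_iff hV).1 h

lemma lw_H_bound (n : ℕ) (x : Fin n → ℝ) (r : ℝ) (hr : 0 ≤ r) (hx : ∀ i, |x i| ≤ r) (k : ℕ) :
    |lwH n x k| ≤ (k + n).choose n * r ^ k := by
  have h1 : ∀ s : Sym (Fin n) k, |(s.1.map x).prod| ≤ r ^ k := by
    intro s
    obtain ⟨s, hs⟩ := s
    change |(s.map x).prod| ≤ r ^ k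
    subst hs
    induction s using Multiset.induction_on with
    | empty => simp
    | cons a s ih =>
      simp only [Multiset.map_cons, Multiset.prod_cons, Multiset.card_cons, pow_succ', abs_mul]
      exact mul_le_mul (hx a) ih (abs_nonneg _) ((abs_nonneg _).trans (hx a))
  refine (Finset.abs_sum_le_sum_abs _ _).trans ((Finset.sum_le_sum fun s _ => h1 s).trans ?_)
  rw [Finset.sum_const, nsmul_eq_mul, Finset.card_univ, Sym.card_sym_eq_multichoose,
    Fintype.card_fin, Nat.multichoose_eq]
  have : (n + k - 1).choose k ≤ (k + n).choose n := by
    rw [← Nat.choose_symm_add, add_comm k n]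
    exact Nat.choose_le_choose _ (Nat.sub_le _ _)
  exact mul_le_mul_of_nonneg_right (by exact_mod_cast this) (by positivity)

lemma lw_summable_pi : ∀ (n : ℕ) (f : Fin n → ℕ → ℝ), (∀ i, Summable (f i)) →
    Summable (fun v : Fin n → ℕ => ∏ i, f i (v i)) := by
  intro n
  induction n with
  | zero => intro f _; exact Summable.of_finite
  | succ n ih =>
    intro f hf
    rw [← (Fin.consEquiv (fun _ : Fin (n+1) => ℕ)).summable_iff]
    have h := (lw_hasSum_mul (hf 0).hasSum (ih (fun i => f i.succ) fun i => hf _).hasSum).summable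
    refine h.congr fun p => ?_
    simp [Fin.prod_univ_succ, Fin.consEquiv]

noncomputable def lwB (n : ℕ) (r : ℝ) (k : ℤ) : ℝ :=
  if 0 ≤ k then (k.toNat + n).choose n * r ^ k.toNat else 0

lemma lw_HZ_bound (n : ℕ) (x : Fin n → ℝ) (r : ℝ) (hr : 0 ≤ r) (hx : ∀ i, |x i| ≤ r) (k : ℤ) :
    |lwHZ n x k| ≤ lwB n r k := by
  unfold lwHZ lwB
  split_ifs
  · exact lw_H_bound n x r hr hx _
  · simp

lemma lw_B_summable (n : ℕ) (r : ℝ) (hr : 0 ≤ r) (hr1 : r < 1) (i j : ℕ) :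
    Summable (fun k : ℕ => lwB n r ((k : ℤ) + (j : ℤ) - (i : ℤ))) := by
  rw [← summable_nat_add_iff i]
  have h : Summable (fun k : ℕ => ((k + n).choose n * r ^ k : ℝ)) :=
    summable_choose_mul_geometric_of_norm_lt_one n (by rwa [Real.norm_of_nonneg hr])
  refine ((summable_nat_add_iff j).2 h).congr fun k => ?_
  have e : ((k + i : ℕ) : ℤ) + (j : ℤ) - (i : ℤ) = ((k + j : ℕ) : ℤ) := by push_cast; ring
  rw [e, lwB, if_pos (by positivity), Int.toNat_natCast]

noncomputable def lwBound (n : ℕ) (r : ℝ) (f : Fin n → ℕ) : ℝ :=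
  ∑ σ : Equiv.Perm (Fin n), ∏ i, lwB n r ((f i : ℤ) + ((σ i : Fin n) : ℤ) - (i : ℤ))

lemma lw_bound (n : ℕ) (x : Fin n → ℝ) (r : ℝ) (hr : 0 ≤ r) (hx : ∀ i, |x i| ≤ r)
    (f : Fin n → ℕ) : ‖aeval x (schur n n f)‖ ≤ lwBound n r f := by
  rw [lw_aeval_schur, ← Matrix.det_transpose, Matrix.det_apply', lwBound]
  refine (norm_sum_le _ _).trans (Finset.sum_le_sum fun σ _ => ?_)
  rw [norm_mul, norm_prod]
  have h1 : ‖((Equiv.Perm.sign σ : ℤ) : ℝ)‖ = 1 := by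
    rcases Int.units_eq_one_or (Equiv.Perm.sign σ) with h | h <;> simp [h]
  rw [h1, one_mul]
  exact Finset.prod_le_prod (fun i _ => norm_nonneg _) fun i _ => lw_HZ_bound n x r hr hx _

lemma lw_bound_summable (n : ℕ) (r : ℝ) (hr : 0 ≤ r) (hr1 : r < 1) :
    Summable (fun f : lwPart n => lwBound n r f.1) := by
  have h : Summable (lwBound n r) := summable_sum fun σ _ =>
    lw_summable_pi n (fun i k => lwB n r ((k : ℤ) + ((σ i : Fin n) : ℤ) - (i : ℤ)))
      fun i => lw_B_summable n r hr hr1 i (σ i)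
  exact h.comp_injective Subtype.val_injective

open Filter Topology in
lemma lw_main (n : ℕ) (x : Fin n → ℝ) (hx : ∀ i, |x i| < 1) :
    ∑' lam : lwPart n, aeval x (schur n n lam.1) =
      (∏ i, (1 - x i)⁻¹) *
        ∏ i, ∏ j ∈ Finset.univ.filter (fun j => i < j), (1 - x i * x j)⁻¹ := by
  obtain ⟨r, hr0, hr1, hr⟩ : ∃ r : ℝ, 0 ≤ r ∧ r < 1 ∧ ∀ i, |x i| < r := by
    have : ∀ᶠ r in 𝓝[<] (1:ℝ), ∀ i, |x i| < r := by
      rw [eventually_all]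
      exact fun i => (eventually_gt_nhds (hx i)).filter_mono nhdsWithin_le_nhds
    obtain ⟨r, h1, h2, h3⟩ := (this.and ((eventually_mem_nhdsWithin).and
      ((eventually_ge_nhds (zero_lt_one (α := ℝ))).filter_mono nhdsWithin_le_nhds))).exists
    exact ⟨r, h3, h2, h1⟩
  let y : ℝ → Fin n → ℝ := fun t i => x i + t * ((i : ℝ) + 1)
  have hy : Continuous y := by fun_prop
  have hy0 : y 0 = x := by funext i; simp [y]
  have hyl : Tendsto y (𝓝[≠] 0) (𝓝 x) := by
    have := hy.tendsto 0
    rw [hy0] at this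
    exact this.mono_left nhdsWithin_le_nhds
  have hyi : ∀ i, Tendsto (fun t => y t i) (𝓝[≠] 0) (𝓝 (x i)) := fun i =>
    (tendsto_pi_nhds.1 hyl i)
  have E1 : ∀ᶠ t in 𝓝[≠] (0:ℝ), ∀ i, |y t i| < r := by
    rw [eventually_all]
    exact fun i => (hyi i).abs.eventually_lt_const (hr i)
  -- any affine function of nonzero slope is eventually nonzero
  have aff : ∀ a b : ℝ, b ≠ 0 → ∀ᶠ t in 𝓝[≠] (0:ℝ), a + t * b ≠ 0 := by
    intro a b hb
    by_cases ha : a = 0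
    · filter_upwards [eventually_mem_nhdsWithin] with t ht
      rw [ha, zero_add]
      exact mul_ne_zero ht hb
    · have : Tendsto (fun t : ℝ => a + t * b) (𝓝 0) (𝓝 (a + 0 * b)) :=
        (by fun_prop : Continuous fun t : ℝ => a + t * b).tendsto 0
      rw [zero_mul, add_zero] at this
      exact (this.eventually_ne ha).filter_mono nhdsWithin_le_nhds
  have E2 : ∀ᶠ t in 𝓝[≠] (0:ℝ), ∀ i, y t i ≠ 0 := by
    rw [eventually_all]
    exact fun i => aff _ _ (by positivity)
  have E3 : ∀ᶠ t in 𝓝[≠] (0:ℝ), ∀ i j, i ≠ j → y t i ≠ y t j := by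
    rw [eventually_all]; intro i
    rw [eventually_all]; intro j
    by_cases hij : i = j
    · simp [hij]
    · have hb : ((i:ℕ):ℝ) - ((j:ℕ):ℝ) ≠ 0 := by
        rw [sub_ne_zero]
        exact fun h => hij (Fin.ext (by exact_mod_cast h))
      filter_upwards [aff (x i - x j) _ hb] with t ht _ heq
      apply ht
      simp only [y] at heq
      linarith
  have L1 : Tendsto (fun t => ∑' lam : lwPart n, aeval (y t) (schur n n lam.1)) (𝓝[≠] 0)
      (𝓝 (∑' lam : lwPart n, aeval x (schur n n lam.1))) := by
    refine tendsto_tsum_of_dominated_convergence (lw_bound_summable n r hr0 hr1) ?_ ?_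
    · intro lam
      have hc : Continuous fun z : Fin n → ℝ => aeval z (schur n n lam.1) := by
        simp only [aeval_def, MvPolynomial.eval₂_eq_eval_map]
        exact MvPolynomial.continuous_eval _
      exact (hc.tendsto x).comp hyl
    · filter_upwards [E1] with t ht lam
      exact lw_bound n _ r hr0 (fun i => (ht i).le) _
  have L2 : Tendsto (fun t => (∏ i, (1 - y t i)⁻¹) *
        ∏ i, ∏ j ∈ Finset.univ.filter (fun j => i < j), (1 - y t i * y t j)⁻¹) (𝓝[≠] 0)
      (𝓝 ((∏ i, (1 - x i)⁻¹) *
        ∏ i, ∏ j ∈ Finset.univ.filter (fun j => i < j), (1 - x i * x j)⁻¹)) := by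
    refine Tendsto.mul (tendsto_finsetProd _ fun i _ => ?_)
      (tendsto_finsetProd _ fun i _ => tendsto_finsetProd _ fun j _ => ?_)
    · refine (tendsto_const_nhds.sub (hyi i)).inv₀ ?_
      have := (abs_lt.1 (hx i)).2
      linarith
    · refine (tendsto_const_nhds.sub ((hyi i).mul (hyi j))).inv₀ ?_
      have h3 : |x i * x j| < 1 := by
        rw [abs_mul]
        have := abs_nonneg (x i)
        have := abs_nonneg (x j)
        have := hx i
        have := hx j
        nlinarith
      have := (abs_lt.1 h3).2
      linarith
  refine tendsto_nhds_unique L1 (L2.congr' ?_)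
  filter_upwards [E1, E2, E3] with t h1 h2 h3
  exact (lw_generic n (y t) (fun i => (h1 i).trans hr1)
    (fun i j h => by by_contra hij; exact h3 i j hij h) h2).tsum_eq.symm

/-- Littlewood's identity: the generating function for all Schur polynomials in `n`
variables is `∑_λ s_λ(x_1, …, x_n) = ∏_i 1/(1-x_i) · ∏_{i<j} 1/(1-x_i x_j)`, the sum over
all partitions `λ` with at most `n` parts (here for real `x_i` with `|x_i| < 1`). -/
theorem littlewood_identity (n : ℕ) (x : Fin n → ℝ) (hx : ∀ i, |x i| < 1) :
    ∑' lam : {f : Fin n → ℕ // ∀ i j : Fin n, i ≤ j → f j ≤ f i},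
        aeval x (schur n n lam.val) =
      (∏ i, (1 - x i)⁻¹) *
        ∏ i, ∏ j ∈ Finset.univ.filter (fun j => i < j), (1 - x i * x j)⁻¹ := by
  exact lw_main n x hx
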